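/- arXiv:math/0404348 — 4 statements merged into one kernel-verified Lean document; each statement's English description precedes it below -/
import Mathlib

section
/- Fix μ ∈ ℝ^n. Let U be a block-diagonal orthogonal matrix (U^{ij} = 0 whenever μ_i ≠ μ_j), let M be a symmetric matrix, and h ∈ ℝ^n a vector with UᵀM_in U = Diag h. Then for any μ-block-constant k-tensor T on ℝ^n, any matrices H₁,…,H_k, any permutation σ on {1,…,k}, and every l = 1,…,k: ⟨T^{τ_l}[h], H̃₁ ∘_σ ⋯ ∘_σ H̃_k⟩ = ⟨T^{τ_l}_in, H₁ ∘_{σ_{(l)}} ⋯ ∘_{σ_{(l)}} H_k ∘_{σ_{(l)}} M_in⟩, where H̃_i = UᵀH_iU. -/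
open scoped BigOperators
open Filter Asymptotics Matrix

attribute [local instance] Matrix.normedAddCommGroup

noncomputable section

/-- A `k`-tensor on `ℝ^n`, identified with its array of entries. -/
abbrev Tensor (k n : ℕ) : Type := (Fin k → Fin n) → ℝ

/-- A `2k`-tensor on `ℝ^n`, with its indices grouped into two groups of `k`. -/
abbrev Tensor2 (k n : ℕ) : Type := (Fin k → Fin n) → (Fin k → Fin n) → ℝ

/-- The `σ`-Hadamard product of `k` matrices:
`(H₁ ∘_σ ⋯ ∘_σ H_k)^{i₁…i_k} = ∏ s, H_s^{i_s i_{σ⁻¹(s)}}`. -/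
def hadamardProd {k n : ℕ} (σ : Equiv.Perm (Fin k))
    (H : Fin k → Matrix (Fin n) (Fin n) ℝ) : Tensor k n :=
  fun i => ∏ s, H s (i s) (i (σ⁻¹ s))

/-- The dot product of two `k`-tensors. -/
def tdot {k n : ℕ} (T₁ T₂ : Tensor k n) : ℝ :=
  ∑ p : Fin k → Fin n, T₁ p * T₂ p

/-- `Diag^σ T`, the `2k`-tensor equal to `T^{i₁…i_k}` when `i_s = j_{σ(s)}` for all `s`,
and `0` otherwise. -/
def diagPerm {k n : ℕ} (σ : Equiv.Perm (Fin k)) (T : Tensor k n) : Tensor2 k n :=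
  fun i j => if ∀ s, i s = j (σ s) then T i else 0

/-- A `2k`-tensor viewed as a `k`-tensor on matrix arguments:
`S[H₁,…,H_k] = ∑_{p,q} S^{p₁…p_k}_{q₁…q_k} ∏ s, H_s^{p_s q_s}`. -/
def apply2 {k n : ℕ} (S : Tensor2 k n)
    (H : Fin k → Matrix (Fin n) (Fin n) ℝ) : ℝ :=
  ∑ p : Fin k → Fin n, ∑ q : Fin k → Fin n, S p q * ∏ s, H s (p s) (q s)

/-- Conjugation `U S Uᵀ` of a `2k`-tensor `S` by a matrix `U`. -/
def conj2 {k n : ℕ} (U : Matrix (Fin n) (Fin n) ℝ) (S : Tensor2 k n) : Tensor2 k n :=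
  fun i j => ∑ p : Fin k → Fin n, ∑ q : Fin k → Fin n,
    S p q * ((∏ s, U (i s) (p s)) * ∏ s, U (j s) (q s))

/-- For a `2(k+1)`-tensor `S` viewed as a `(k+1)`-tensor on matrices, `S[H]` fixes the last
matrix argument to `H`, producing a `2k`-tensor. -/
def lastApply {k n : ℕ} (S : Tensor2 (k+1) n)
    (H : Matrix (Fin n) (Fin n) ℝ) : Tensor2 k n :=
  fun i j => ∑ a : Fin n, ∑ b : Fin n, S (Fin.snoc i a) (Fin.snoc j b) * H a b

/-- `T[x]`: contraction of the last index of a `(k+1)`-tensor against a vector. -/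
def contract {k n : ℕ} (T : Tensor (k+1) n) (x : Fin n → ℝ) : Tensor k n :=
  fun i => ∑ a : Fin n, T (Fin.snoc i a) * x a

/-- A permutation `σ` of `{1,…,k}` viewed as a permutation of `{1,…,k+1}` fixing `k+1`. -/
def extPerm {k : ℕ} (σ : Equiv.Perm (Fin k)) : Equiv.Perm (Fin (k+1)) :=
  (Equiv.permCongr finSuccEquivLast).symm σ.optionCongr

/-- `σ_{(l)} := σ ∘ τ_l`, where `τ_l` is the transposition `(l, k+1)` (and `σ` fixes `k+1`).
Here `l : Fin (k+1)`; taking `l = Fin.last k` gives `σ_{(k+1)} = σ`. -/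
def permIns {k : ℕ} (σ : Equiv.Perm (Fin k)) (l : Fin (k+1)) : Equiv.Perm (Fin (k+1)) :=
  extPerm σ * Equiv.swap l (Fin.last k)

/-- A tensor is `μ`-block-constant if its entries agree on componentwise `μ`-equivalent
multi-indices (`i ∼ j` iff `μ i = μ j`). -/
def BlockConstant {k n : ℕ} (μ : Fin n → ℝ) (T : Tensor k n) : Prop :=
  ∀ i j : Fin k → Fin n, (∀ s, μ (i s) = μ (j s)) → T i = T j

/-- `H_in`: the diagonal-block part of `H` (w.r.t. the blocks of `μ`). -/
def matIn {n : ℕ} (μ : Fin n → ℝ) (H : Matrix (Fin n) (Fin n) ℝ) :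
    Matrix (Fin n) (Fin n) ℝ :=
  Matrix.of fun i j => if μ i = μ j then H i j else 0

/-- `H_out = H - H_in`: the off-diagonal-block part of `H`. -/
def matOut {n : ℕ} (μ : Fin n → ℝ) (H : Matrix (Fin n) (Fin n) ℝ) :
    Matrix (Fin n) (Fin n) ℝ :=
  H - matIn μ H

/-- The divided-difference tensor `T^{(l)}_out` of a `k`-tensor `T`, a `(k+1)`-tensor. -/
def outDD {k n : ℕ} (μ : Fin n → ℝ) (T : Tensor k n) (l : Fin k) : Tensor (k+1) n :=
  fun i => if μ (i l.castSucc) = μ (i (Fin.last k)) then 0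
    else (T (Function.update (fun s => i s.castSucc) l (i (Fin.last k)))
          - T (fun s => i s.castSucc)) / (μ (i (Fin.last k)) - μ (i l.castSucc))

/-- `T^{τ_l}`: the `(k+1)`-tensor equal to `T^{i₁…i_k}` on the hyperplane `i_l = i_{k+1}`
and `0` elsewhere. -/
def liftTau {k n : ℕ} (T : Tensor k n) (l : Fin k) : Tensor (k+1) n :=
  fun i => if i l.castSucc = i (Fin.last k) then T (fun s => i s.castSucc) else 0

/-- `T^{τ_l}_in`: the "inflated" `(k+1)`-tensor, equal to
`T^{i₁…i_{l-1} i_{k+1} i_{l+1}…i_k}` when `μ_{i_l} = μ_{i_{k+1}}` and `0` otherwise. -/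
def liftTauIn {k n : ℕ} (μ : Fin n → ℝ) (T : Tensor k n) (l : Fin k) : Tensor (k+1) n :=
  fun i => if μ (i l.castSucc) = μ (i (Fin.last k))
    then T (Function.update (fun s => i s.castSucc) l (i (Fin.last k))) else 0

/-- `lam` is the map sending each symmetric matrix to the vector of its eigenvalues
ordered nonincreasingly: it is nonincreasing and realized by an orthogonal
diagonalization. -/
def IsEigCF {n : ℕ} (lam : Matrix (Fin n) (Fin n) ℝ → Fin n → ℝ) : Prop :=
  ∀ A : Matrix (Fin n) (Fin n) ℝ, A.IsSymm →
    Antitone (lam A) ∧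
    ∃ U : Matrix (Fin n) (Fin n) ℝ, Uᵀ * U = 1 ∧
      A = U * Matrix.diagonal (lam A) * Uᵀ

/-- `h` is the concatenated vector `(λ(X₁ᵀ A X₁), …, λ(X_rᵀ A X_r))` of the nonincreasingly
ordered eigenvalues of the diagonal blocks of `A` (blocks determined by `μ`):
equivalently, `h` is nonincreasing within each block of `μ` and `Diag h` is obtained from
`A_in` by conjugating with a block-diagonal orthogonal matrix. -/
def IsBlockEig {n : ℕ} (μ : Fin n → ℝ) (A : Matrix (Fin n) (Fin n) ℝ)
    (h : Fin n → ℝ) : Prop :=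
  (∀ i j : Fin n, i ≤ j → μ i = μ j → h j ≤ h i) ∧
  ∃ V : Matrix (Fin n) (Fin n) ℝ, Vᵀ * V = 1 ∧
    (∀ i j, μ i ≠ μ j → V i j = 0) ∧
    Vᵀ * matIn μ A * V = Matrix.diagonal h

/-!
Grouping the indices of `H₁ ∘_σ ⋯ ∘_σ H_k` into rows and columns exhibits it as the diagonal of a
matrix `F` on multi-indices, the Kronecker product `⨂ H_s` with its columns permuted by `σ`.
Conjugating every `H_s` by `U` conjugates `F` by `⨂ U`, which commutes with `Diag T` because `U` is
block-diagonal and `T` block-constant. By cyclicity of the trace the left-hand side is therefore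
`tr (F · Diag T · P)`, where `P` is the Kronecker product with `M_in = U (Diag h) U⁻¹` at
position `l` and identities elsewhere. Evaluating this trace entrywise gives the right-hand side,
the row index of `M_in` playing the role of `i_{k+1}`.
-/

section PiKronecker

variable {ι R : Type*} [Fintype ι]

section CommMonoid

variable [CommMonoid R]

/-- The Kronecker product `⨂ₛ A s` of a finite family of matrices, with rows and columns indexed
by multi-indices. -/
def piKronecker {m n : ι → Type*} (A : ∀ s, Matrix (m s) (n s) R) :
    Matrix (∀ s, m s) (∀ s, n s) R :=
  Matrix.of fun i j => ∏ s, A s (i s) (j s)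

theorem piKronecker_apply {m n : ι → Type*} (A : ∀ s, Matrix (m s) (n s) R)
    (i : ∀ s, m s) (j : ∀ s, n s) : piKronecker A i j = ∏ s, A s (i s) (j s) :=
  rfl

theorem piKronecker_submatrix_arrowCongr {m n : Type*} (A : Matrix m n R) (σ : Equiv.Perm ι) :
    (piKronecker fun _ : ι => A).submatrix
      (σ.arrowCongr (Equiv.refl m)) (σ.arrowCongr (Equiv.refl n)) = piKronecker fun _ => A := by
  ext i j
  exact Equiv.prod_comp σ.symm fun s => A (i s) (j s)

end CommMonoid

section CommMonoidWithZero

variable [CommMonoidWithZero R]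

theorem piKronecker_diagonal {m : ι → Type*} [∀ s, DecidableEq (m s)] (d : ∀ s, m s → R) :
    (piKronecker fun s => Matrix.diagonal (d s)) = Matrix.diagonal fun i => ∏ s, d s (i s) := by
  ext i j
  obtain rfl | hij := eq_or_ne i j
  · simp only [piKronecker_apply, Matrix.diagonal_apply_eq]
  · obtain ⟨s, hs⟩ := Function.ne_iff.1 hij
    rw [Matrix.diagonal_apply_ne _ hij, piKronecker_apply]
    exact Finset.prod_eq_zero (Finset.mem_univ s) (Matrix.diagonal_apply_ne _ hs)

variable {m : Type*} [DecidableEq ι] [DecidableEq m]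

theorem piKronecker_mulSingle_diagonal (l : ι) (d : m → R) :
    piKronecker (Pi.mulSingle l (Matrix.diagonal d)) =
      Matrix.diagonal fun i : ι → m => d (i l) := by
  have hdiag : (Pi.mulSingle l (Matrix.diagonal d) : ι → Matrix m m R) =
      fun s => Matrix.diagonal (Pi.mulSingle (M := fun _ => m → R) l d s) :=
    funext fun s => (Pi.apply_mulSingle (fun _ => Matrix.diagonal)
      (fun _ => Matrix.diagonal_one) l d s).symm
  rw [hdiag, piKronecker_diagonal]
  congr 1
  ext i
  rw [Fintype.prod_eq_single l fun s hs => by rw [Pi.mulSingle_eq_of_ne hs, Pi.one_apply],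
    Pi.mulSingle_eq_same]

theorem piKronecker_mulSingle_update_apply (l : ι) (N : Matrix m m R) (i : ι → m) (a : m) :
    piKronecker (Pi.mulSingle l N) (Function.update i l a) i = N a (i l) := by
  rw [piKronecker_apply, Fintype.prod_eq_single l]
  · simp
  · intro s hs
    simp [hs]

theorem piKronecker_mulSingle_apply_eq_zero {l : ι} (N : Matrix m m R) {i j : ι → m}
    (hij : i ∉ Set.range (Function.update j l)) : piKronecker (Pi.mulSingle l N) i j = 0 := by
  obtain ⟨s, hs, hne⟩ : ∃ s, s ≠ l ∧ i s ≠ j s := by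
    by_contra! hoff
    exact hij ⟨i l, (Function.eq_update_iff.2 ⟨rfl, hoff⟩).symm⟩
  rw [piKronecker_apply, Finset.prod_eq_zero (Finset.mem_univ s)]
  rw [Pi.mulSingle_eq_of_ne hs, Matrix.one_apply_ne hne]

end CommMonoidWithZero

section CommSemiring

variable [CommSemiring R] [DecidableEq ι]

theorem piKronecker_mul {l m n : ι → Type*} [∀ s, Fintype (m s)]
    (A : ∀ s, Matrix (l s) (m s) R) (B : ∀ s, Matrix (m s) (n s) R) :
    (piKronecker fun s => A s * B s) = piKronecker A * piKronecker B := by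
  ext i j
  simp only [piKronecker_apply, Matrix.mul_apply, Finset.prod_univ_sum, Fintype.piFinset_univ,
    Finset.prod_mul_distrib]

variable {m : Type*} [Fintype m] [DecidableEq m]

theorem trace_mul_piKronecker_mulSingle (A : Matrix (ι → m) (ι → m) R) (l : ι)
    (N : Matrix m m R) :
    (A * piKronecker (Pi.mulSingle l N)).trace =
      ∑ i, ∑ a, A i (Function.update i l a) * N a (i l) := by
  refine Finset.sum_congr rfl fun i _ => ?_
  rw [Matrix.diag_apply, Matrix.mul_apply]
  refine (Fintype.sum_of_injective _ (Function.update_injective i l) _ _ (fun q hq => ?_)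
    fun a => ?_).symm
  · rw [piKronecker_mulSingle_apply_eq_zero N hq, mul_zero]
  · rw [piKronecker_mulSingle_update_apply]

theorem piKronecker_mulSingle_conj {U V : Matrix m m R} (hUV : U * V = 1) (l : ι)
    (D : Matrix m m R) :
    piKronecker (Pi.mulSingle l (U * D * V)) =
      (piKronecker fun _ => U) * piKronecker (Pi.mulSingle l D) * piKronecker fun _ => V := by
  rw [← piKronecker_mul, ← piKronecker_mul]
  congr 1
  ext1 s
  obtain rfl | hs := eq_or_ne s l
  · simp only [Pi.mulSingle_eq_same]
  · simp only [Pi.mulSingle_eq_of_ne hs, mul_one, hUV]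

end CommSemiring

end PiKronecker

section HadamardMatrix

variable {ι m R : Type*} [Fintype ι]

/-- The matrix on multi-indices with entries `∏ s, H_s^{i_s j_{σ⁻¹(s)}}`, whose diagonal is the
`σ`-Hadamard product of the `H_s`. It is encoded as `⨂ₛ H_s` with its columns permuted. -/
def hadamardMatrix [CommMonoid R] (σ : Equiv.Perm ι) (H : ι → Matrix m m R) :
    Matrix (ι → m) (ι → m) R :=
  (piKronecker H).submatrix id (σ.arrowCongr (Equiv.refl m))

theorem hadamardMatrix_apply [CommMonoid R] (σ : Equiv.Perm ι) (H : ι → Matrix m m R)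
    (i j : ι → m) :
    hadamardMatrix σ H i j = ∏ s, H s (i s) (j (σ⁻¹ s)) :=
  rfl

theorem hadamardMatrix_mul_mul [CommSemiring R] [DecidableEq ι] [Fintype m]
    (σ : Equiv.Perm ι) (V : Matrix m m R) (H : ι → Matrix m m R) (U : Matrix m m R) :
    (hadamardMatrix σ fun s => V * H s * U) =
      (piKronecker fun _ => V) * hadamardMatrix σ H * piKronecker fun _ => U := by
  conv_rhs => rw [hadamardMatrix, ← piKronecker_submatrix_arrowCongr U σ]
  rw [hadamardMatrix, piKronecker_mul, piKronecker_mul, ← Matrix.submatrix_mul_equiv _ _ id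
    (σ.arrowCongr (Equiv.refl m)) (σ.arrowCongr (Equiv.refl m))]
  rfl

end HadamardMatrix

section Tensor

variable {n k : ℕ}

theorem hadamardProd_eq_diag_hadamardMatrix (σ : Equiv.Perm (Fin k))
    (H : Fin k → Matrix (Fin n) (Fin n) ℝ) : hadamardProd σ H = (hadamardMatrix σ H).diag :=
  rfl

theorem tdot_diag (T : Tensor k n) (A : Matrix (Fin k → Fin n) (Fin k → Fin n) ℝ) :
    tdot T A.diag = (Matrix.diagonal T * A).trace := by
  simp only [tdot, Matrix.trace, Matrix.diag_apply, Matrix.diagonal_mul]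

theorem contract_liftTau (T : Tensor k n) (l : Fin k) (h : Fin n → ℝ) :
    contract (liftTau T l) h = fun i => T i * h (i l) := by
  ext i
  simp [contract, liftTau]

theorem diagonal_contract_liftTau (T : Tensor k n) (l : Fin k) (h : Fin n → ℝ) :
    Matrix.diagonal (contract (liftTau T l) h) =
      Matrix.diagonal T * piKronecker (Pi.mulSingle l (Matrix.diagonal h)) := by
  rw [contract_liftTau, piKronecker_mulSingle_diagonal, Matrix.diagonal_mul_diagonal]

theorem BlockConstant.commute_diagonal_piKronecker {μ : Fin n → ℝ} {T : Tensor k n}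
    (hT : BlockConstant μ T) {U : Fin k → Matrix (Fin n) (Fin n) ℝ}
    (hU : ∀ s i j, μ i ≠ μ j → U s i j = 0) :
    Commute (Matrix.diagonal T) (piKronecker U) := by
  ext i j
  rw [Matrix.diagonal_mul, Matrix.mul_diagonal, mul_comm]
  by_cases hij : ∀ s, μ (i s) = μ (j s)
  · rw [hT i j hij]
  · obtain ⟨s, hs⟩ := not_forall.1 hij
    have hzero : piKronecker U i j = 0 := Finset.prod_eq_zero (Finset.mem_univ s) (hU s _ _ hs)
    rw [hzero, zero_mul, zero_mul]

theorem extPerm_inv_castSucc (σ : Equiv.Perm (Fin k)) (s : Fin k) :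
    (extPerm σ)⁻¹ s.castSucc = (σ⁻¹ s).castSucc := by
  rw [Equiv.Perm.inv_eq_iff_eq]
  simp [extPerm, Equiv.permCongr]

theorem extPerm_inv_last (σ : Equiv.Perm (Fin k)) :
    (extPerm σ)⁻¹ (Fin.last k) = Fin.last k := by
  rw [Equiv.Perm.inv_eq_iff_eq]
  simp [extPerm, Equiv.permCongr]

theorem permIns_inv_last (σ : Equiv.Perm (Fin k)) (l : Fin (k + 1)) :
    (permIns σ l)⁻¹ (Fin.last k) = l := by
  rw [permIns, _root_.mul_inv_rev, Equiv.Perm.mul_apply, extPerm_inv_last, Equiv.swap_inv,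
    Equiv.swap_apply_right]

theorem snoc_swap_castSucc_last {α : Type*} (i : Fin k → α) (a : α) (l s : Fin k) :
    (Fin.snoc i a : Fin (k + 1) → α) (Equiv.swap l.castSucc (Fin.last k) s.castSucc) =
      Function.update i l a s := by
  obtain rfl | hs := eq_or_ne s l
  · rw [Equiv.swap_apply_left, Fin.snoc_last, Function.update_self]
  · rw [Equiv.swap_apply_of_ne_of_ne ((Fin.castSucc_injective k).ne hs) s.castSucc_ne_last,
      Fin.snoc_castSucc, Function.update_of_ne hs]

theorem snoc_permIns_inv_castSucc {α : Type*} (i : Fin k → α) (a : α) (σ : Equiv.Perm (Fin k))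
    (l s : Fin k) :
    (Fin.snoc i a : Fin (k + 1) → α) ((permIns σ l.castSucc)⁻¹ s.castSucc) =
      Function.update i l a (σ⁻¹ s) := by
  rw [permIns, _root_.mul_inv_rev, Equiv.Perm.mul_apply, extPerm_inv_castSucc, Equiv.swap_inv,
    snoc_swap_castSucc_last]

theorem hadamardProd_permIns_snoc (σ : Equiv.Perm (Fin k)) (l : Fin k)
    (H : Fin k → Matrix (Fin n) (Fin n) ℝ) (N : Matrix (Fin n) (Fin n) ℝ)
    (i : Fin k → Fin n) (a : Fin n) :
    hadamardProd (permIns σ l.castSucc) (Fin.snoc H N) (Fin.snoc i a) =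
      hadamardMatrix σ H i (Function.update i l a) * N a (i l) := by
  rw [hadamardProd, Fin.prod_univ_castSucc]
  simp only [hadamardMatrix_apply, snoc_permIns_inv_castSucc, permIns_inv_last,
    Fin.snoc_castSucc, Fin.snoc_last]

theorem tdot_eq_sum_snoc (S T : Tensor (k + 1) n) :
    tdot S T = ∑ i : Fin k → Fin n, ∑ a : Fin n, S (Fin.snoc i a) * T (Fin.snoc i a) := by
  rw [tdot, ← (Fin.snocEquiv fun _ => Fin n).sum_comp, Fintype.sum_prod_type_right]
  rfl

theorem liftTauIn_snoc_mul_matIn (μ : Fin n → ℝ) (T : Tensor k n) (l : Fin k)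
    (M : Matrix (Fin n) (Fin n) ℝ) (i : Fin k → Fin n) (a : Fin n) :
    liftTauIn μ T l (Fin.snoc i a) * matIn μ M a (i l) =
      T (Function.update i l a) * matIn μ M a (i l) := by
  by_cases ha : μ (i l) = μ a
  · simp only [liftTauIn, Fin.snoc_castSucc, Fin.snoc_last, if_pos ha]
  · simp only [matIn, Matrix.of_apply, if_neg (Ne.symm ha), mul_zero]

theorem tdot_liftTauIn_hadamardProd (μ : Fin n → ℝ) (M : Matrix (Fin n) (Fin n) ℝ)
    (T : Tensor k n) (H : Fin k → Matrix (Fin n) (Fin n) ℝ) (σ : Equiv.Perm (Fin k))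
    (l : Fin k) :
    tdot (liftTauIn μ T l) (hadamardProd (permIns σ l.castSucc) (Fin.snoc H (matIn μ M))) =
      (hadamardMatrix σ H * Matrix.diagonal T *
        piKronecker (Pi.mulSingle l (matIn μ M))).trace := by
  rw [tdot_eq_sum_snoc, trace_mul_piKronecker_mulSingle]
  refine Finset.sum_congr rfl fun i _ => Finset.sum_congr rfl fun a _ => ?_
  rw [hadamardProd_permIns_snoc, mul_left_comm, liftTauIn_snoc_mul_matIn, Matrix.mul_diagonal,
    mul_assoc]

theorem tdot_contract_liftTau_hadamardProd_conj {μ : Fin n → ℝ} {U V : Matrix (Fin n) (Fin n) ℝ}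
    (hUV : U * V = 1) (hU : ∀ i j, μ i ≠ μ j → U i j = 0) (h : Fin n → ℝ) {T : Tensor k n}
    (hT : BlockConstant μ T) (H : Fin k → Matrix (Fin n) (Fin n) ℝ) (σ : Equiv.Perm (Fin k))
    (l : Fin k) :
    tdot (contract (liftTau T l) h) (hadamardProd σ fun s => V * H s * U) =
      (hadamardMatrix σ H * Matrix.diagonal T *
        piKronecker (Pi.mulSingle l (U * Matrix.diagonal h * V))).trace := by
  rw [piKronecker_mulSingle_conj hUV, hadamardProd_eq_diag_hadamardMatrix, tdot_diag,
    diagonal_contract_liftTau, hadamardMatrix_mul_mul]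
  set F := hadamardMatrix σ H
  set K := piKronecker fun _ : Fin k => U
  set L := piKronecker fun _ : Fin k => V
  set D :=
    piKronecker (Pi.mulSingle l (Matrix.diagonal h) : Fin k → Matrix (Fin n) (Fin n) ℝ)
  have hcomm : Matrix.diagonal T * K = K * Matrix.diagonal T :=
    hT.commute_diagonal_piKronecker fun _ => hU
  calc (Matrix.diagonal T * D * (L * F * K)).trace
      = (F * K * (Matrix.diagonal T * D * L)).trace := by
        rw [Matrix.mul_assoc L, ← Matrix.mul_assoc, Matrix.trace_mul_comm]
    _ = (F * (K * Matrix.diagonal T) * (D * L)).trace := by simp only [Matrix.mul_assoc]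
    _ = (F * Matrix.diagonal T * (K * D * L)).trace := by
        rw [← hcomm]
        simp only [Matrix.mul_assoc]

end Tensor

theorem statement13_general {n k : ℕ} (μ : Fin n → ℝ)
    (U V : Matrix (Fin n) (Fin n) ℝ) (hVU : V * U = 1)
    (hUb : ∀ i j : Fin n, μ i ≠ μ j → U i j = 0)
    (M : Matrix (Fin n) (Fin n) ℝ)
    (h : Fin n → ℝ) (hh : V * matIn μ M * U = Matrix.diagonal h)
    (T : Tensor k n) (hT : BlockConstant μ T)
    (H : Fin k → Matrix (Fin n) (Fin n) ℝ) (σ : Equiv.Perm (Fin k)) (l : Fin k) :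
    tdot (contract (liftTau T l) h) (hadamardProd σ (fun s => V * H s * U))
      = tdot (liftTauIn μ T l)
          (hadamardProd (permIns σ l.castSucc) (Fin.snoc H (matIn μ M))) := by
  have hUV : U * V = 1 := mul_eq_one_comm.1 hVU
  have hMin : U * Matrix.diagonal h * V = matIn μ M := by
    calc U * Matrix.diagonal h * V = (U * V) * matIn μ M * (U * V) := by
          simp only [← hh, Matrix.mul_assoc]
      _ = matIn μ M := by rw [hUV, one_mul, mul_one]
  rw [tdot_contract_liftTau_hadamardProd_conj hUV hUb h hT, hMin, tdot_liftTauIn_hadamardProd]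

/-- Theorem `dec15a`, part 2. Fix `μ`. Let `U` be a block-diagonal
orthogonal matrix, `M` symmetric, and `h` with `UᵀM_in U = Diag h`. For any
`μ`-block-constant `k`-tensor `T`, matrices `H₁,…,H_k`, permutation `σ`, and every
`l ∈ {1,…,k}`:
`⟨T^{τ_l}[h], H̃₁ ∘_σ ⋯ ∘_σ H̃_k⟩ = ⟨T^{τ_l}_in, H₁ ∘_{σ_{(l)}} ⋯ ∘_{σ_{(l)}} H_k ∘_{σ_{(l)}} M_in⟩`,
where `H̃ᵢ = UᵀHᵢU`. -/
theorem statement13 {n k : ℕ} (μ : Fin n → ℝ)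
    (U : Matrix (Fin n) (Fin n) ℝ) (hU : Uᵀ * U = 1)
    (hUb : ∀ i j : Fin n, μ i ≠ μ j → U i j = 0)
    (M : Matrix (Fin n) (Fin n) ℝ) (hM : M.IsSymm)
    (h : Fin n → ℝ) (hh : Uᵀ * matIn μ M * U = Matrix.diagonal h)
    (T : Tensor k n) (hT : BlockConstant μ T)
    (H : Fin k → Matrix (Fin n) (Fin n) ℝ) (σ : Equiv.Perm (Fin k)) (l : Fin k) :
    tdot (contract (liftTau T l) h) (hadamardProd σ (fun s => Uᵀ * H s * U))
      = tdot (liftTauIn μ T l)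
          (hadamardProd (permIns σ l.castSucc) (Fin.snoc H (matIn μ M))) := by
  exact statement13_general μ U Uᵀ hU hUb M h hh T hT H σ l

end
end

section
/- Fix μ ∈ ℝ^n. Let U be a block-diagonal orthogonal matrix (U^{ij} = 0 whenever μ_i ≠ μ_j), H an arbitrary n×n matrix, σ a permutation on {1,…,k}, and l ∈ {1,…,k}. (1) If T is a (k+1)-tensor with T^{p₁…p_{k+1}} = 0 whenever μ_{p_l} = μ_{p_{k+1}}, then (U(Diag^{σ_{(l)}} T)Uᵀ)[H_in] = 0. (2) If T is a (k+1)-tensor with T^{p₁…p_{k+1}} = 0 whenever μ_{p_l} ≠ μ_{p_{k+1}}, then (U(Diag^{σ_{(l)}} T)Uᵀ)[H_out] = 0. (3) For any (k+1)-tensor T, (U(Diag^{σ_{(k+1)}} T)Uᵀ)[H_out] = 0. Here, for a 2(k+1)-tensor S viewed as a (k+1)-tensor on matrices, S[H] denotes fixing the last matrix argument to H; the conclusions say these 2k-tensors vanish identically. -/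
open scoped BigOperators
open Filter Asymptotics Matrix

attribute [local instance] Matrix.normedAddCommGroup

noncomputable section

/-!
The identity `(U S Uᵀ)[G] = U (S[Uᵀ G U]) Uᵀ` moves the conjugation from the tensor to the matrix
argument. A block-diagonal `U` preserves the splitting of a matrix into `H_in` and `H_out`, so
`Uᵀ H_in U = (Uᵀ H U)_in` and `Uᵀ H_out U = (Uᵀ H U)_out`. Finally, when `π m = k + 1`, the tensor
`(Diag^π T)[G]` only involves the products `T^p G^{p_{k+1} p_m}`, and these vanish because `T` and
`G` are supported on complementary sets of index pairs. For `π = σ_{(l)}` one takes `m = l`.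
Part (3) is part (2) with `l = k + 1`, where the condition on `T` is void.
-/

section Blocks

variable {n : ℕ} {μ : Fin n → ℝ}

/-- A matrix is block-diagonal with respect to the level sets of `μ` if its entries vanish outside
the diagonal blocks. These are the matrices whose conjugation preserves `matIn` and `matOut`. -/
def IsBlockDiagonal (μ : Fin n → ℝ) (U : Matrix (Fin n) (Fin n) ℝ) : Prop :=
  ∀ i j, μ i ≠ μ j → U i j = 0

theorem matIn_apply_of_ne (A : Matrix (Fin n) (Fin n) ℝ) {i j : Fin n} (hij : μ i ≠ μ j) :
    matIn μ A i j = 0 :=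
  if_neg hij

theorem matOut_apply_of_eq (A : Matrix (Fin n) (Fin n) ℝ) {i j : Fin n} (hij : μ i = μ j) :
    matOut μ A i j = 0 :=
  sub_eq_zero.2 (if_pos hij).symm

theorem matIn_transpose (A : Matrix (Fin n) (Fin n) ℝ) : matIn μ Aᵀ = (matIn μ A)ᵀ := by
  ext i j
  simp only [matIn, of_apply, transpose_apply, eq_comm]

theorem IsBlockDiagonal.matIn_mul_right {U : Matrix (Fin n) (Fin n) ℝ} (hU : IsBlockDiagonal μ U)
    (A : Matrix (Fin n) (Fin n) ℝ) : matIn μ (A * U) = matIn μ A * U := by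
  ext i j
  simp only [matIn, of_apply, mul_apply]
  split_ifs with hij
  · refine Finset.sum_congr rfl fun x _ => ?_
    by_cases hx : μ x = μ j
    · rw [if_pos (hij.trans hx.symm)]
    · rw [hU x j hx, mul_zero, mul_zero]
  · refine (Finset.sum_eq_zero fun x _ => ?_).symm
    by_cases hx : μ x = μ j
    · rw [if_neg (hx ▸ hij), zero_mul]
    · rw [hU x j hx, mul_zero]

theorem IsBlockDiagonal.transpose {U : Matrix (Fin n) (Fin n) ℝ} (hU : IsBlockDiagonal μ U) :
    IsBlockDiagonal μ Uᵀ :=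
  fun i j hij => hU j i hij.symm

theorem IsBlockDiagonal.matIn_mul_left {U : Matrix (Fin n) (Fin n) ℝ} (hU : IsBlockDiagonal μ U)
    (A : Matrix (Fin n) (Fin n) ℝ) : matIn μ (U * A) = U * matIn μ A := by
  rw [← transpose_inj, ← matIn_transpose, transpose_mul, hU.transpose.matIn_mul_right,
    matIn_transpose, transpose_mul]

theorem IsBlockDiagonal.matIn_conj {U : Matrix (Fin n) (Fin n) ℝ} (hU : IsBlockDiagonal μ U)
    (A : Matrix (Fin n) (Fin n) ℝ) : matIn μ (Uᵀ * A * U) = Uᵀ * matIn μ A * U := by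
  rw [hU.matIn_mul_right, hU.transpose.matIn_mul_left]

theorem IsBlockDiagonal.matOut_conj {U : Matrix (Fin n) (Fin n) ℝ} (hU : IsBlockDiagonal μ U)
    (A : Matrix (Fin n) (Fin n) ℝ) : matOut μ (Uᵀ * A * U) = Uᵀ * matOut μ A * U := by
  simp only [matOut, hU.matIn_conj, Matrix.mul_sub, Matrix.sub_mul]

end Blocks

section LastArgument

variable {k n : ℕ}

theorem sum_snoc {α M : Type*} [Fintype α] [AddCommMonoid M] (f : (Fin (k + 1) → α) → M) :
    ∑ p, f p = ∑ p : Fin k → α, ∑ a, f (Fin.snoc p a) := by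
  rw [← (Fin.snocEquiv fun _ => α).sum_comp, Fintype.sum_prod_type_right]
  rfl

theorem lastApply_conj2 (U : Matrix (Fin n) (Fin n) ℝ) (S : Tensor2 (k + 1) n)
    (G : Matrix (Fin n) (Fin n) ℝ) :
    lastApply (conj2 U S) G = conj2 U (lastApply S (Uᵀ * G * U)) := by
  ext i j
  have conj_apply (c d : Fin n) : (Uᵀ * G * U) c d = ∑ a, ∑ b, U a c * (G a b * U b d) := by
    simp only [mul_mul_apply, dotProduct, mulVec, transpose_apply, Finset.mul_sum]
  calc lastApply (conj2 U S) G i j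
      = ∑ p, ∑ q, ∑ a, ∑ b, S p q * ((∏ s, U ((Fin.snoc i a : Fin (k + 1) → Fin n) s) (p s)) *
          ∏ s, U ((Fin.snoc j b : Fin (k + 1) → Fin n) s) (q s)) * G a b := by
        simp only [lastApply, conj2, Finset.sum_mul]
        rw [Finset.sum_comm_cycle]
        exact Finset.sum_congr rfl fun p _ => Finset.sum_comm_cycle
    _ = ∑ p, ∑ q, S p q * (Uᵀ * G * U) (p (Fin.last k)) (q (Fin.last k)) *
          ((∏ s, U (i s) (p s.castSucc)) * ∏ s, U (j s) (q s.castSucc)) := by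
        simp only [Fin.prod_univ_castSucc, Fin.snoc_castSucc, Fin.snoc_last, conj_apply,
          Finset.mul_sum, Finset.sum_mul]
        congr! 4
        ring
    _ = conj2 U (lastApply S (Uᵀ * G * U)) i j := by
        simp only [conj2, lastApply, sum_snoc, Fin.snoc_castSucc, Fin.snoc_last, Finset.sum_mul]
        exact Finset.sum_congr rfl fun p _ => Finset.sum_comm

theorem lastApply_diagPerm_eq_zero {π : Equiv.Perm (Fin (k + 1))} {m : Fin (k + 1)}
    (hm : π m = Fin.last k) {T : Tensor (k + 1) n} {G : Matrix (Fin n) (Fin n) ℝ}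
    (hTG : ∀ p, T p = 0 ∨ G (p (Fin.last k)) (p m) = 0) :
    lastApply (diagPerm π T) G = 0 := by
  ext i j
  refine Finset.sum_eq_zero fun a _ => Finset.sum_eq_zero fun b _ => ?_
  rw [diagPerm]
  split_ifs with hij
  · have hb : (Fin.snoc i a : Fin (k + 1) → Fin n) m = b := by rw [hij m, hm, Fin.snoc_last]
    simpa only [Fin.snoc_last, hb, mul_eq_zero] using hTG (Fin.snoc i a)
  · exact zero_mul _

theorem conj2_zero (U : Matrix (Fin n) (Fin n) ℝ) : conj2 U (0 : Tensor2 k n) = 0 := by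
  ext
  simp only [conj2, Pi.zero_apply, zero_mul, Finset.sum_const_zero]

end LastArgument

section Permutations

variable {k : ℕ} (σ : Equiv.Perm (Fin k))

theorem extPerm_last : extPerm σ (Fin.last k) = Fin.last k := by
  simp [extPerm]

theorem permIns_apply_self (l : Fin (k + 1)) : permIns σ l l = Fin.last k := by
  rw [permIns, Equiv.Perm.mul_apply, Equiv.swap_apply_left, extPerm_last]

theorem permIns_last : permIns σ (Fin.last k) = extPerm σ := by
  rw [permIns, Equiv.swap_self, ← Equiv.Perm.one_def, mul_one]

end Permutations

theorem statement14_general {n k : ℕ} {μ : Fin n → ℝ} {U : Matrix (Fin n) (Fin n) ℝ}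
    (hU : IsBlockDiagonal μ U) (H : Matrix (Fin n) (Fin n) ℝ) (σ : Equiv.Perm (Fin k))
    (l : Fin (k + 1)) (T : Tensor (k + 1) n) :
    ((∀ p, μ (p l) = μ (p (Fin.last k)) → T p = 0) →
      lastApply (conj2 U (diagPerm (permIns σ l) T)) (matIn μ H) = 0) ∧
    ((∀ p, μ (p l) ≠ μ (p (Fin.last k)) → T p = 0) →
      lastApply (conj2 U (diagPerm (permIns σ l) T)) (matOut μ H) = 0) := by
  have hl := permIns_apply_self σ l
  rw [lastApply_conj2, lastApply_conj2, ← hU.matIn_conj, ← hU.matOut_conj]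
  constructor <;> intro hT
  · rw [lastApply_diagPerm_eq_zero hl fun p => ?_, conj2_zero]
    by_cases hp : μ (p l) = μ (p (Fin.last k))
    · exact .inl (hT p hp)
    · exact .inr (matIn_apply_of_ne _ (Ne.symm hp))
  · rw [lastApply_diagPerm_eq_zero hl fun p => ?_, conj2_zero]
    by_cases hp : μ (p l) = μ (p (Fin.last k))
    · exact .inr (matOut_apply_of_eq _ hp.symm)
    · exact .inl (hT p hp)

/-- Proposition `dec15b`. Fix `μ`. Let `U` be a block-diagonal
orthogonal matrix, `H` arbitrary, `σ` a permutation of `{1,…,k}`, `l ∈ {1,…,k}`.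
(1) If `T^{p₁…p_{k+1}} = 0` whenever `μ_{p_l} = μ_{p_{k+1}}`, then
`(U(Diag^{σ_{(l)}}T)Uᵀ)[H_in] = 0`.
(2) If `T^{p₁…p_{k+1}} = 0` whenever `μ_{p_l} ≠ μ_{p_{k+1}}`, then
`(U(Diag^{σ_{(l)}}T)Uᵀ)[H_out] = 0`.
(3) For any `(k+1)`-tensor `T`, `(U(Diag^{σ_{(k+1)}}T)Uᵀ)[H_out] = 0`. -/
theorem statement14 {n k : ℕ} (μ : Fin n → ℝ)
    (U : Matrix (Fin n) (Fin n) ℝ) (hU : Uᵀ * U = 1)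
    (hUb : ∀ i j : Fin n, μ i ≠ μ j → U i j = 0)
    (H : Matrix (Fin n) (Fin n) ℝ) (σ : Equiv.Perm (Fin k)) (l : Fin k) :
    (∀ T : Tensor (k+1) n,
        (∀ p : Fin (k+1) → Fin n, μ (p l.castSucc) = μ (p (Fin.last k)) → T p = 0) →
        lastApply (conj2 U (diagPerm (permIns σ l.castSucc) T)) (matIn μ H) = 0) ∧
    (∀ T : Tensor (k+1) n,
        (∀ p : Fin (k+1) → Fin n, μ (p l.castSucc) ≠ μ (p (Fin.last k)) → T p = 0) →
        lastApply (conj2 U (diagPerm (permIns σ l.castSucc) T)) (matOut μ H) = 0) ∧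
    (∀ T : Tensor (k+1) n,
        lastApply (conj2 U (diagPerm (extPerm σ) T)) (matOut μ H) = 0) :=
  ⟨fun T => (statement14_general hUb H σ l.castSucc T).1,
    fun T => (statement14_general hUb H σ l.castSucc T).2,
    fun T => permIns_last σ ▸
      (statement14_general hUb H σ (Fin.last k) T).2 fun _ h => (h rfl).elim⟩

end
end

section
/- Let {M_m} be a sequence of n×n symmetric matrices converging to 0 with M_m/‖M_m‖ → M, let μ ∈ ℝ^n with μ₁ ≥ … ≥ μ_n, and let U_m → U be orthogonal matrices with Diag μ + M_m = U_m (Diag λ(Diag μ + M_m)) U_mᵀ for all m, where λ(·) is the vector of eigenvalues in nonincreasing order. Then for every μ-block-constant k-tensor T on ℝ^n and any permutation σ on {1,…,k}, the 2k-tensors (U_m(Diag^σ T)U_mᵀ − Diag^σ T)/‖M_m‖ converge, as m → ∞, to Σ_{l=1}^k (Diag^{σ_{(l)}} T^{(l)}_out)[M], where for a 2(k+1)-tensor S viewed as a (k+1)-tensor on matrices, S[M] denotes fixing the last matrix argument to M. -/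
open scoped BigOperators
open Filter Asymptotics Matrix

attribute [local instance] Matrix.normedAddCommGroup

noncomputable section

/-!
Both sides are linear in `T`, and a `μ`-block-constant tensor is a combination of pure tensors
`x₁ ⊗ ⋯ ⊗ x_k` whose factors are constant on the blocks of `μ`. On a pure tensor the entry of
`U (Diag^σ T) Uᵀ` at `(i, j)` is `∏ s, (U (Diag x_s) Uᵀ) (i_s, j_{σ s})`, so by the product rule
it remains to differentiate `U (Diag x) Uᵀ` for a single block-constant vector `x`.

The columns of `U` are eigenvectors of `Diag μ + M` and the eigenvalues converge to `μ`, so the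
entries of `U` outside the diagonal blocks are `O(‖M‖)`. Hence `U (Diag x) Uᵀ - Diag x` is `O(‖M‖)`,
and `O(‖M‖²)` within the diagonal blocks; outside them, commutation with `Diag μ + M` expresses it
through divided differences of `x`.
-/

theorem tendsto_mul_prod_sub_prod {α ι R : Type*} [DecidableEq ι] [CommRing R]
    [TopologicalSpace R] [IsTopologicalRing R] {L : Filter α} {c : α → R} {f : ι → α → R}
    {a d : ι → R} {s : Finset ι} (hf : ∀ i ∈ s, Tendsto (f i) L (nhds (a i)))
    (hd : ∀ i ∈ s, Tendsto (fun t => c t * (f i t - a i)) L (nhds (d i))) :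
    Tendsto (fun t => c t * (∏ i ∈ s, f i t - ∏ i ∈ s, a i)) L
      (nhds (∑ i ∈ s, (∏ j ∈ s.erase i, a j) * d i)) := by
  induction s using Finset.induction_on with
  | empty => simpa using tendsto_const_nhds
  | insert x s hx ih =>
    rw [Finset.forall_mem_insert] at hf hd
    have hprod : Tendsto (fun t => ∏ i ∈ s, f i t) L (nhds (∏ i ∈ s, a i)) :=
      tendsto_finsetProd _ hf.2
    have hsum : ∑ i ∈ insert x s, (∏ j ∈ (insert x s).erase i, a j) * d i
        = d x * ∏ i ∈ s, a i + a x * ∑ i ∈ s, (∏ j ∈ s.erase i, a j) * d i := by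
      rw [Finset.sum_insert hx, Finset.erase_insert hx, Finset.mul_sum, mul_comm]
      congr 1
      refine Finset.sum_congr rfl fun i hi => ?_
      have hne : x ≠ i := fun h => hx (h ▸ hi)
      rw [Finset.erase_insert_of_ne hne, Finset.prod_insert (by simp [hx]), mul_assoc]
    rw [hsum]
    refine ((hd.1.mul hprod).add ((ih hf.2 hd.2).const_mul (a x))).congr fun t => ?_
    rw [Finset.prod_insert hx, Finset.prod_insert hx]
    ring

theorem tendsto_of_mem_span {α R E F : Type*} [Semiring R] [AddCommMonoid E] [Module R E]
    [AddCommMonoid F] [Module R F] [TopologicalSpace F] [ContinuousAdd F]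
    [ContinuousConstSMul R F] {L : Filter α} {f : α → E →ₗ[R] F} {g : E →ₗ[R] F} {s : Set E}
    (h : ∀ x ∈ s, Tendsto (fun t => f t x) L (nhds (g x))) {x : E}
    (hx : x ∈ Submodule.span R s) : Tendsto (fun t => f t x) L (nhds (g x)) := by
  induction hx using Submodule.span_induction with
  | mem x hx => exact h x hx
  | zero => simpa using tendsto_const_nhds
  | add x y _ _ hx hy => simpa using hx.add hy
  | smul a x _ hx => simpa using hx.const_smul a

theorem eq_of_antitone_of_charpoly_diagonal_eq {R : Type*} [CommRing R] [IsDomain R]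
    [LinearOrder R] {n : ℕ} {μ ν : Fin n → R} (hμ : Antitone μ) (hν : Antitone ν)
    (h : (diagonal μ).charpoly = (diagonal ν).charpoly) : μ = ν := by
  have roots_charpoly (f : Fin n → R) :
      (diagonal f).charpoly.roots = (List.ofFn f : Multiset R) := by
    rw [charpoly_diagonal, ← Fin.univ_val_map,
      ← Polynomial.roots_multiset_prod_X_sub_C (Finset.univ.val.map f), Multiset.map_map]
    rfl
  have hperm : (List.ofFn μ).Perm (List.ofFn ν) := by
    rw [← Multiset.coe_eq_coe, ← roots_charpoly, ← roots_charpoly, h]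
  exact List.ofFn_injective (hperm.eq_of_sortedGE hμ.sortedGE_ofFn hν.sortedGE_ofFn)

section Matrix

variable {α ι : Type*} [Fintype ι] [DecidableEq ι] {L : Filter α}

theorem isCompact_unitaryGroup {𝕜 : Type*} [RCLike 𝕜] :
    IsCompact (unitaryGroup ι 𝕜 : Set (Matrix ι ι 𝕜)) := by
  have hbox : IsCompact (Set.univ.pi fun _ : ι => Set.univ.pi fun _ : ι =>
      Metric.closedBall (0 : 𝕜) 1) :=
    isCompact_univ_pi fun _ => isCompact_univ_pi fun _ => isCompact_closedBall 0 1
  refine hbox.of_isClosed_subset (isClosed_unitary (R := Matrix ι ι 𝕜)) fun U hU i _ j _ => ?_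
  simpa using entry_norm_bound_of_unitary hU i j

theorem transpose_mul_conj_mul {R : Type*} [CommRing R] {U : Matrix ι ι R}
    (hU : U ∈ orthogonalGroup ι R) (A : Matrix ι ι R) : Uᵀ * (U * A * Uᵀ) * U = A := by
  rw [mem_orthogonalGroup_iff'] at hU
  rw [← Matrix.mul_assoc, ← Matrix.mul_assoc, hU, Matrix.one_mul, Matrix.mul_assoc, hU,
    Matrix.mul_one]

theorem charpoly_transpose_mul_mul {R : Type*} [CommRing R] {U : Matrix ι ι R}
    (hU : U ∈ orthogonalGroup ι R) (A : Matrix ι ι R) : (Uᵀ * A * U).charpoly = A.charpoly := by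
  rw [Matrix.mul_assoc, charpoly_mul_comm, Matrix.mul_assoc, (mem_orthogonalGroup_iff ι R).1 hU,
    Matrix.mul_one]

/-- Along an ultrafilter `U` converges to some orthogonal `V`, so `diagonal ν` converges to
`Vᵀ * diagonal μ * V`, a diagonal matrix with the same characteristic polynomial as
`diagonal μ`. -/
theorem tendsto_of_antitone_of_tendsto_conj_diagonal {n : ℕ} {μ : Fin n → ℝ} {ν : α → Fin n → ℝ}
    {U : α → Matrix (Fin n) (Fin n) ℝ} (hμ : Antitone μ) (hν : ∀ t, Antitone (ν t))
    (hU : ∀ t, U t ∈ orthogonalGroup (Fin n) ℝ)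
    (h : Tendsto (fun t => U t * diagonal (ν t) * (U t)ᵀ) L (nhds (diagonal μ))) :
    Tendsto ν L (nhds μ) := by
  refine (tendsto_iff_ultrafilter _ _ _).2 fun 𝒰 h𝒰 => ?_
  obtain ⟨V, hV, hUV⟩ := isCompact_iff_ultrafilter_le_nhds.1
    (isCompact_unitaryGroup (ι := Fin n) (𝕜 := ℝ)) (𝒰.map U)
    (le_principal_iff.2 (mem_map.2 (univ_mem' hU)))
  have hlim : Tendsto (fun t => diagonal (ν t)) 𝒰 (nhds (Vᵀ * diagonal μ * V)) := by
    have hUV : Tendsto U 𝒰 (nhds V) := hUV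
    have hUVt : Tendsto (fun t => (U t)ᵀ) 𝒰 (nhds Vᵀ) :=
      (continuous_id.matrix_transpose.tendsto V).comp hUV
    simpa only [transpose_mul_conj_mul (hU _)] using (hUVt.mul (h.mono_left h𝒰)).mul hUV
  set w := diag (Vᵀ * diagonal μ * V)
  have hw : Tendsto ν 𝒰 (nhds w) := by
    simpa only [Function.comp_def, id_eq, diag_diagonal] using
      (continuous_id.matrix_diag.tendsto _).comp hlim
  have hdiag : Vᵀ * diagonal μ * V = diagonal w :=
    tendsto_nhds_unique hlim ((continuous_id.matrix_diagonal.tendsto w).comp hw)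
  have hw_antitone : Antitone w := fun i j hij =>
    le_of_tendsto_of_tendsto' (tendsto_pi_nhds.1 hw j) (tendsto_pi_nhds.1 hw i) fun t => hν t hij
  have hμw : μ = w := eq_of_antitone_of_charpoly_diagonal_eq hμ hw_antitone <| by
    rw [← hdiag, charpoly_transpose_mul_mul hV]
  exact hμw ▸ hw

theorem IsEigCF.tendsto_diagonal_add {n : ℕ} {lam : Matrix (Fin n) (Fin n) ℝ → Fin n → ℝ}
    (hlam : IsEigCF lam) {μ : Fin n → ℝ} (hμ : Antitone μ) {M : α → Matrix (Fin n) (Fin n) ℝ}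
    (hMsym : ∀ t, (M t).IsSymm) (hM : Tendsto M L (nhds 0)) :
    Tendsto (fun t => lam (diagonal μ + M t)) L (nhds μ) := by
  choose hanti U hU hdec using fun t => hlam _ ((isSymm_diagonal μ).add (hMsym t))
  refine tendsto_of_antitone_of_tendsto_conj_diagonal hμ hanti
    (fun t => (mem_orthogonalGroup_iff' _ _).2 (hU t)) ?_
  simpa only [← hdec, add_zero] using hM.const_add (diagonal μ)

theorem mul_apply_eq_of_diagonal_add_eq_conj {R : Type*} [CommRing R] {μ ν : ι → R}
    {M U : Matrix ι ι R} (hU : U ∈ orthogonalGroup ι R)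
    (h : diagonal μ + M = U * diagonal ν * Uᵀ) (i p : ι) :
    (M * U) i p = U i p * (ν p - μ i) := by
  have heig : diagonal μ * U + M * U = U * diagonal ν := by
    rw [← Matrix.add_mul, h, Matrix.mul_assoc, (mem_orthogonalGroup_iff' ι R).1 hU, Matrix.mul_one]
  have hip := congrFun₂ heig i p
  rw [Matrix.add_apply, diagonal_mul, mul_diagonal] at hip
  linear_combination hip

theorem conj_diagonal_sub_diagonal_apply {R : Type*} [CommRing R] {U : Matrix ι ι R}
    (hU : U ∈ orthogonalGroup ι R) (x : ι → R) (i j : ι) :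
    (U * diagonal x * Uᵀ - diagonal x) i j = ∑ p, (x p - x i) * (U i p * U j p) := by
  have hdiag : diagonal x i j = ∑ p, x i * (U i p * U j p) := by
    have hone : ∑ p, U i p * U j p = (1 : Matrix ι ι R) i j := by
      rw [← (mem_orthogonalGroup_iff ι R).1 hU]; rfl
    rw [← Finset.mul_sum, hone, diagonal_apply, one_apply, mul_ite, mul_one, mul_zero]
  rw [Matrix.sub_apply, hdiag, Matrix.mul_apply, ← Finset.sum_sub_distrib]
  refine Finset.sum_congr rfl fun p _ => ?_
  rw [mul_diagonal, transpose_apply]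
  ring

theorem commute_conj_diagonal {R : Type*} [CommRing R] {U : Matrix ι ι R}
    (hU : U ∈ orthogonalGroup ι R) (x y : ι → R) :
    Commute (U * diagonal x * Uᵀ) (U * diagonal y * Uᵀ) := by
  have hmul (x y : ι → R) : U * diagonal x * Uᵀ * (U * diagonal y * Uᵀ)
      = U * diagonal (fun i => x i * y i) * Uᵀ := by
    calc U * diagonal x * Uᵀ * (U * diagonal y * Uᵀ)
        = U * diagonal x * (Uᵀ * U) * diagonal y * Uᵀ := by simp only [Matrix.mul_assoc]
      _ = U * (diagonal x * diagonal y) * Uᵀ := by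
        rw [(mem_orthogonalGroup_iff' ι R).1 hU, Matrix.mul_one, Matrix.mul_assoc U]
      _ = U * diagonal (fun i => x i * y i) * Uᵀ := by rw [diagonal_mul_diagonal]
  simp only [Commute, SemiconjBy, hmul, mul_comm]

/-- The matrix of divided differences `(x_j - x_i) / (μ_j - μ_i)`, by which `Diag x` is
differentiated along a perturbation of `Diag μ`. Its entries with `μ_i = μ_j` are `0`,
as division by zero gives `0`; this matches the convention of `outDD`. -/
def dividedDiff {ι K : Type*} [Field K] (μ x : ι → K) : Matrix ι ι K :=
  of fun i j => (x j - x i) / (μ j - μ i)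

theorem sub_mul_apply_eq_of_commute {R : Type*} [CommRing R] {μ : ι → R} {M X : Matrix ι ι R}
    (h : Commute X (diagonal μ + M)) (i j : ι) :
    (μ j - μ i) * X i j = (M * X - X * M) i j := by
  have hij := congrFun₂ h.eq i j
  rw [Matrix.mul_add, Matrix.add_mul, Matrix.add_apply, Matrix.add_apply, diagonal_mul,
    mul_diagonal] at hij
  rw [Matrix.sub_apply]
  linear_combination hij

theorem isBigO_one_apply_of_mem_unitaryGroup {𝕜 : Type*} [RCLike 𝕜] {U : α → Matrix ι ι 𝕜}
    (hU : ∀ t, U t ∈ unitaryGroup ι 𝕜) (i p : ι) :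
    (fun t => U t i p) =O[L] (fun _ => (1 : ℝ)) :=
  .of_bound 1 <| .of_forall fun t => by
    simpa using entry_norm_bound_of_unitary (hU t) i p

section Perturbation

attribute [local instance] Matrix.normedSpace

variable {μ x : ι → ℝ} {ν : α → ι → ℝ} {M U : α → Matrix ι ι ℝ}
  (hU : ∀ t, U t ∈ orthogonalGroup ι ℝ) (hν : Tendsto ν L (nhds μ))
  (hdec : ∀ t, diagonal μ + M t = U t * diagonal (ν t) * (U t)ᵀ)
  (hx : x.FactorsThrough μ)

include hU hν hdec

theorem isBigO_eigenbasis_apply_of_ne {i p : ι} (hip : μ i ≠ μ p) : (fun t => U t i p) =O[L] M := by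
  have hgap : Tendsto (fun t => ν t p - μ i) L (nhds (μ p - μ i)) :=
    (tendsto_pi_nhds.1 hν p).sub_const _
  have hne : μ p - μ i ≠ 0 := sub_ne_zero.2 hip.symm
  have hMU : (fun t => (M t * U t) i p) =O[L] fun t => ‖M t‖ * 1 := by
    simp only [Matrix.mul_apply]
    refine .fun_sum fun q _ => .mul (.of_bound 1 <| .of_forall fun t => ?_)
      (isBigO_one_apply_of_mem_unitaryGroup hU q p)
    simpa using norm_entry_le_entrywise_sup_norm (M t)
  have hquot := hMU.mul ((hgap.inv₀ hne).isBigO_one ℝ)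
  simp only [mul_one] at hquot
  refine (hquot.congr' ?_ .rfl).of_norm_right
  filter_upwards [hgap.eventually_ne hne] with t ht
  rw [mul_apply_eq_of_diagonal_add_eq_conj (hU t) (hdec t), mul_inv_cancel_right₀ ht]

include hx

theorem isBigO_conj_diagonal_sub_diagonal (i j : ι) :
    (fun t => (U t * diagonal x * (U t)ᵀ - diagonal x) i j) =O[L] M := by
  simp only [conj_diagonal_sub_diagonal_apply (hU _)]
  refine .fun_sum fun p _ => ?_
  by_cases hip : μ i = μ p
  · simpa only [hx hip, sub_self, zero_mul] using isBigO_zero _ _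
  · have := (isBigO_eigenbasis_apply_of_ne hU hν hdec hip).norm_right.mul
      (isBigO_one_apply_of_mem_unitaryGroup (L := L) hU j p)
    simpa using this.const_mul_left (x p - x i)

theorem isBigO_sq_conj_diagonal_sub_diagonal {i j : ι} (hij : μ i = μ j) :
    (fun t => (U t * diagonal x * (U t)ᵀ - diagonal x) i j) =O[L] fun t => ‖M t‖ ^ 2 := by
  simp only [conj_diagonal_sub_diagonal_apply (hU _), sq]
  refine .fun_sum fun p _ => ?_
  by_cases hip : μ i = μ p
  · simpa only [hx hip, sub_self, zero_mul] using isBigO_zero _ _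
  · exact ((isBigO_eigenbasis_apply_of_ne hU hν hdec hip).norm_right.mul
      (isBigO_eigenbasis_apply_of_ne hU hν hdec (hij ▸ hip)).norm_right).const_mul_left (x p - x i)

variable (hM : Tendsto M L (nhds 0))
include hM

theorem tendsto_conj_diagonal :
    Tendsto (fun t => U t * diagonal x * (U t)ᵀ) L (nhds (diagonal x)) := by
  refine tendsto_pi_nhds.2 fun i => tendsto_pi_nhds.2 fun j => tendsto_sub_nhds_zero_iff.1 ?_
  exact (isBigO_conj_diagonal_sub_diagonal hU hν hdec hx i j).trans_tendsto hM

/-- Within a block of `μ` the increment is of second order in `M`; across blocks it is read off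
from the fact that `U * diagonal x * Uᵀ` commutes with `diagonal μ + M`. -/
theorem tendsto_smul_conj_diagonal_sub_diagonal {c : α → ℝ} {H : Matrix ι ι ℝ}
    (hH : Tendsto (fun t => c t • M t) L (nhds H)) :
    Tendsto (fun t => c t • (U t * diagonal x * (U t)ᵀ - diagonal x)) L
      (nhds (dividedDiff μ x ⊙ H)) := by
  refine tendsto_pi_nhds.2 fun i => tendsto_pi_nhds.2 fun j => ?_
  by_cases hij : μ i = μ j
  · have hzero : Tendsto (fun t => ‖c t‖ * ‖M t‖ ^ 2) L (nhds 0) := by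
      simpa [norm_smul, mul_assoc, sq] using hH.norm.mul hM.norm
    have hsq := isBigO_sq_conj_diagonal_sub_diagonal hU hν hdec hx hij
    simpa [dividedDiff, hij] using ((isBigO_refl c L).norm_right.mul hsq).trans_tendsto hzero
  · have hgap : μ j - μ i ≠ 0 := sub_ne_zero.2 (Ne.symm hij)
    have hX := tendsto_conj_diagonal hU hν hdec hx hM
    have hcomm := tendsto_pi_nhds.1 (tendsto_pi_nhds.1 ((hH.mul hX).sub (hX.mul hH)) i) j
    have hlimit : (dividedDiff μ x ⊙ H) i j
        = (H * diagonal x - diagonal x * H) i j / (μ j - μ i) := by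
      rw [Matrix.sub_apply, mul_diagonal, diagonal_mul, hadamard_apply, dividedDiff, of_apply]
      ring
    rw [hlimit]
    refine (hcomm.div_const (μ j - μ i)).congr fun t => ?_
    have hentry := sub_mul_apply_eq_of_commute (hdec t ▸ commute_conj_diagonal (hU t) x (ν t)) i j
    rw [Matrix.smul_mul, Matrix.mul_smul, ← smul_sub, Matrix.smul_apply, ← hentry,
      Matrix.smul_apply, Matrix.sub_apply, diagonal_apply_ne _ (ne_of_apply_ne μ hij), sub_zero,
      smul_eq_mul, smul_eq_mul, mul_left_comm, mul_div_cancel_left₀ _ hgap]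

end Perturbation

end Matrix

section Tensor

variable {k n : ℕ}

/-- The pure tensor `x₁ ⊗ ⋯ ⊗ x_k`. -/
def pureTensor (x : Fin k → Fin n → ℝ) : Tensor k n :=
  fun i => ∏ s, x s (i s)

/-- `T` is a function of the values of `μ` at its indices, hence a combination of products of
indicators of the blocks of `μ`. -/
theorem BlockConstant.mem_span_pureTensor {μ : Fin n → ℝ} {T : Tensor k n}
    (hT : BlockConstant μ T) :
    T ∈ Submodule.span ℝ (pureTensor '' {x | ∀ s, (x s).FactorsThrough μ}) := by
  have hfactors : Function.FactorsThrough T (fun i => μ ∘ i) := fun i j hij =>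
    hT i j (congrFun hij)
  have hsum : T = ∑ v ∈ Fintype.piFinset fun _ => Finset.univ.image μ,
      Function.extend (fun i => μ ∘ i) T 0 v •
        pureTensor fun s a => if μ a = v s then 1 else 0 := by
    ext i
    rw [Finset.sum_apply, Finset.sum_eq_single_of_mem (μ ∘ i) (by simp)]
    · simp [pureTensor, hfactors.extend_apply]
    · intro v _ hv
      obtain ⟨s, hs⟩ := Function.ne_iff.1 hv.symm
      rw [Pi.smul_apply, pureTensor, Finset.prod_eq_zero (Finset.mem_univ s) (if_neg hs), smul_zero]
  rw [hsum]
  refine Submodule.sum_mem _ fun v _ => Submodule.smul_mem _ _ <| Submodule.subset_span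
    ⟨_, fun s a b hab => ?_, rfl⟩
  simp only [hab]

/-- `conj2` as a linear map of the tensor. -/
def conj2Lin (U : Matrix (Fin n) (Fin n) ℝ) : Tensor2 k n →ₗ[ℝ] Tensor2 k n where
  toFun := conj2 U
  map_add' S S' := by ext; simp [conj2, add_mul, Finset.sum_add_distrib]
  map_smul' a S := by ext; simp [conj2, mul_assoc, Finset.mul_sum]

/-- `diagPerm` as a linear map of the tensor. -/
def diagPermLin (σ : Equiv.Perm (Fin k)) : Tensor k n →ₗ[ℝ] Tensor2 k n where
  toFun := diagPerm σ
  map_add' T T' := by ext; simp only [diagPerm, Pi.add_apply]; split_ifs <;> simp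
  map_smul' a T := by ext; simp [diagPerm]

/-- `outDD` as a linear map of the tensor. -/
def outDDLin (μ : Fin n → ℝ) (l : Fin k) : Tensor k n →ₗ[ℝ] Tensor (k + 1) n where
  toFun T := outDD μ T l
  map_add' T T' := by ext; simp only [outDD, Pi.add_apply]; split_ifs <;> ring
  map_smul' a T := by
    ext; simp only [outDD, Pi.smul_apply, smul_eq_mul, RingHom.id_apply]; split_ifs <;> ring

/-- `lastApply` as a linear map of the tensor. -/
def lastApplyLin (H : Matrix (Fin n) (Fin n) ℝ) : Tensor2 (k + 1) n →ₗ[ℝ] Tensor2 k n where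
  toFun S := lastApply S H
  map_add' S S' := by ext; simp [lastApply, add_mul, Finset.sum_add_distrib]
  map_smul' a S := by ext; simp [lastApply, mul_assoc, Finset.mul_sum]

theorem conj2_diagPerm_apply (U : Matrix (Fin n) (Fin n) ℝ) (σ : Equiv.Perm (Fin k))
    (T : Tensor k n) (i j : Fin k → Fin n) :
    conj2 U (diagPerm σ T) i j = ∑ p, T p * ∏ s, (U (i s) (p s) * U (j (σ s)) (p s)) := by
  refine Finset.sum_congr rfl fun p _ => ?_
  rw [Finset.sum_eq_single_of_mem (p ∘ σ.symm) (Finset.mem_univ _)]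
  · rw [diagPerm, if_pos (by simp), Finset.prod_mul_distrib,
      ← Equiv.prod_comp σ fun s => U (j s) ((p ∘ σ.symm) s)]
    simp only [Function.comp_apply, Equiv.symm_apply_apply]
  · intro q _ hq
    rw [diagPerm, if_neg, zero_mul]
    intro h
    exact hq <| funext fun s => by simp [h]

theorem conj2_diagPerm_pureTensor (U : Matrix (Fin n) (Fin n) ℝ) (σ : Equiv.Perm (Fin k))
    (x : Fin k → Fin n → ℝ) (i j : Fin k → Fin n) :
    conj2 U (diagPerm σ (pureTensor x)) i j
      = ∏ s, (U * diagonal (x s) * Uᵀ) (i s) (j (σ s)) := by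
  simp only [conj2_diagPerm_apply, Matrix.mul_apply (M := U * _), mul_diagonal, transpose_apply]
  rw [Finset.prod_univ_sum, Fintype.piFinset_univ]
  refine Finset.sum_congr rfl fun p _ => ?_
  rw [pureTensor, ← Finset.prod_mul_distrib]
  exact Finset.prod_congr rfl fun s _ => by ring

theorem diagPerm_pureTensor (σ : Equiv.Perm (Fin k)) (x : Fin k → Fin n → ℝ)
    (i j : Fin k → Fin n) :
    diagPerm σ (pureTensor x) i j = ∏ s, diagonal (x s) (i s) (j (σ s)) := by
  simp only [diagPerm, pureTensor, diagonal_apply, Finset.prod_ite_zero, Finset.mem_univ,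
    true_imp_iff]

theorem permIns_castSucc_last (σ : Equiv.Perm (Fin k)) (l : Fin k) :
    permIns σ l.castSucc (Fin.last k) = (σ l).castSucc := by
  simp [permIns, extPerm, Equiv.permCongr]

theorem permIns_castSucc_self (σ : Equiv.Perm (Fin k)) (l : Fin k) :
    permIns σ l.castSucc l.castSucc = Fin.last k := by
  simp [permIns, extPerm, Equiv.permCongr]

theorem permIns_castSucc_of_ne (σ : Equiv.Perm (Fin k)) {l s : Fin k} (hs : s ≠ l) :
    permIns σ l.castSucc s.castSucc = (σ s).castSucc := by
  have hswap : Equiv.swap l.castSucc (Fin.last k) s.castSucc = s.castSucc :=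
    Equiv.swap_apply_of_ne_of_ne ((Fin.castSucc_injective _).ne hs) (Fin.castSucc_lt_last s).ne
  simp [permIns, extPerm, Equiv.permCongr, hswap]

theorem forall_snoc_eq_snoc_permIns_iff (σ : Equiv.Perm (Fin k)) (l : Fin k)
    (i j : Fin k → Fin n) (a b : Fin n) :
    (∀ s, (Fin.snoc i a : Fin (k + 1) → Fin n) s
      = (Fin.snoc j b : Fin (k + 1) → Fin n) (permIns σ l.castSucc s)) ↔
      (∀ s ≠ l, i s = j (σ s)) ∧ a = j (σ l) ∧ b = i l := by
  constructor
  · intro h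
    refine ⟨fun s hs => ?_, ?_, ?_⟩
    · simpa [permIns_castSucc_of_ne σ hs] using h s.castSucc
    · simpa [permIns_castSucc_last] using h (Fin.last k)
    · simpa [permIns_castSucc_self] using (h l.castSucc).symm
  · rintro ⟨hne, rfl, rfl⟩ s
    induction s using Fin.lastCases with
    | last => simp [permIns_castSucc_last]
    | cast s =>
      by_cases hs : s = l
      · subst hs; simp [permIns_castSucc_self]
      · simp [permIns_castSucc_of_ne σ hs, hne s hs]

theorem lastApply_diagPerm_permIns (σ : Equiv.Perm (Fin k)) (l : Fin k) (S : Tensor (k + 1) n)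
    (H : Matrix (Fin n) (Fin n) ℝ) (i j : Fin k → Fin n) :
    lastApply (diagPerm (permIns σ l.castSucc) S) H i j
      = if ∀ s ≠ l, i s = j (σ s) then S (Fin.snoc i (j (σ l))) * H (j (σ l)) (i l) else 0 := by
  simp only [lastApply, diagPerm, forall_snoc_eq_snoc_permIns_iff, ite_and, ite_mul, zero_mul]
  split_ifs <;> simp

theorem outDD_pureTensor_snoc (μ : Fin n → ℝ) (x : Fin k → Fin n → ℝ) (l : Fin k)
    (i : Fin k → Fin n) (b : Fin n) :
    outDD μ (pureTensor x) l (Fin.snoc i b)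
      = (∏ s ∈ Finset.univ.erase l, x s (i s)) * dividedDiff μ (x l) (i l) b := by
  have hupdate : pureTensor x (Function.update i l b)
      = (∏ s ∈ Finset.univ.erase l, x s (i s)) * x l b := by
    rw [pureTensor, ← Finset.prod_erase_mul _ _ (Finset.mem_univ l), Function.update_self]
    congr 1
    refine Finset.prod_congr rfl fun s hs => ?_
    rw [Function.update_of_ne (Finset.ne_of_mem_erase hs)]
  have hself : pureTensor x i = (∏ s ∈ Finset.univ.erase l, x s (i s)) * x l (i l) :=
    (Finset.prod_erase_mul _ _ (Finset.mem_univ l)).symm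
  simp only [outDD, Fin.snoc_castSucc, Fin.snoc_last, hupdate, hself, dividedDiff, of_apply]
  split_ifs with h
  · simp [h]
  · ring

theorem lastApply_diagPerm_permIns_outDD_pureTensor (μ : Fin n → ℝ) (σ : Equiv.Perm (Fin k))
    (l : Fin k) (x : Fin k → Fin n → ℝ) (H : Matrix (Fin n) (Fin n) ℝ) (i j : Fin k → Fin n) :
    lastApply (diagPerm (permIns σ l.castSucc) (outDD μ (pureTensor x) l)) H i j
      = (∏ s ∈ Finset.univ.erase l, diagonal (x s) (i s) (j (σ s)))
        * (dividedDiff μ (x l) ⊙ Hᵀ) (i l) (j (σ l)) := by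
  simp only [lastApply_diagPerm_permIns, outDD_pureTensor_snoc, diagonal_apply,
    Finset.prod_ite_zero, Finset.mem_erase, Finset.mem_univ, and_true, hadamard_apply,
    transpose_apply, ite_mul, zero_mul, mul_assoc]

end Tensor

section General

variable {k n : ℕ} {α : Type*} {L : Filter α} {μ : Fin n → ℝ} {ν : α → Fin n → ℝ}
  {M U : α → Matrix (Fin n) (Fin n) ℝ} {c : α → ℝ} {H : Matrix (Fin n) (Fin n) ℝ}

theorem tendsto_smul_conj2_diagPerm_pureTensor_sub (hM : Tendsto M L (nhds 0))
    (hH : Tendsto (fun t => c t • M t) L (nhds H)) (hU : ∀ t, U t ∈ orthogonalGroup (Fin n) ℝ)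
    (hν : Tendsto ν L (nhds μ))
    (hdec : ∀ t, diagonal μ + M t = U t * diagonal (ν t) * (U t)ᵀ)
    {x : Fin k → Fin n → ℝ} (hx : ∀ s, (x s).FactorsThrough μ) (σ : Equiv.Perm (Fin k)) :
    Tendsto (fun t => c t • (conj2 (U t) (diagPerm σ (pureTensor x)) - diagPerm σ (pureTensor x)))
      L (nhds (∑ l,
        lastApply (diagPerm (permIns σ l.castSucc) (outDD μ (pureTensor x) l)) H)) := by
  have hM_symm (t : α) : (M t)ᵀ = M t := by
    rw [← add_sub_cancel_left (diagonal μ) (M t), hdec t]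
    simp [Matrix.mul_assoc]
  have hH_transpose : Tendsto (fun t => c t • M t) L (nhds Hᵀ) := by
    simpa only [Function.comp_def, id_eq, transpose_smul, hM_symm] using
      (continuous_id.matrix_transpose.tendsto H).comp hH
  refine tendsto_pi_nhds.2 fun i => tendsto_pi_nhds.2 fun j => ?_
  have hfactor (s : Fin k) := tendsto_conj_diagonal hU hν hdec (hx s) hM
  have hfactor_deriv (s : Fin k) :=
    tendsto_smul_conj_diagonal_sub_diagonal hU hν hdec (hx s) hM hH_transpose
  simp only [Pi.smul_apply, Pi.sub_apply, smul_eq_mul, conj2_diagPerm_pureTensor,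
    diagPerm_pureTensor, Finset.sum_apply, lastApply_diagPerm_permIns_outDD_pureTensor]
  exact tendsto_mul_prod_sub_prod
    (fun s _ => tendsto_pi_nhds.1 (tendsto_pi_nhds.1 (hfactor s) (i s)) (j (σ s)))
    (fun s _ => tendsto_pi_nhds.1 (tendsto_pi_nhds.1 (hfactor_deriv s) (i s)) (j (σ s)))

theorem statement16_general (hM : Tendsto M L (nhds 0))
    (hH : Tendsto (fun t => c t • M t) L (nhds H)) (hU : ∀ t, U t ∈ orthogonalGroup (Fin n) ℝ)
    (hν : Tendsto ν L (nhds μ))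
    (hdec : ∀ t, diagonal μ + M t = U t * diagonal (ν t) * (U t)ᵀ)
    {T : Tensor k n} (hT : BlockConstant μ T) (σ : Equiv.Perm (Fin k)) :
    Tendsto (fun t => c t • (conj2 (U t) (diagPerm σ T) - diagPerm σ T)) L
      (nhds (∑ l, lastApply (diagPerm (permIns σ l.castSucc) (outDD μ T l)) H)) := by
  have hspan := tendsto_of_mem_span (L := L)
    (f := fun t => c t • (conj2Lin (U t) ∘ₗ diagPermLin σ - diagPermLin σ))
    (g := ∑ l, lastApplyLin H ∘ₗ diagPermLin (permIns σ l.castSucc) ∘ₗ outDDLin μ l)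
    (s := pureTensor '' {x | ∀ s, (x s).FactorsThrough μ}) ?_ hT.mem_span_pureTensor
  · simpa [conj2Lin, diagPermLin, lastApplyLin, outDDLin] using hspan
  · rintro _ ⟨x, hx, rfl⟩
    simpa [conj2Lin, diagPermLin, lastApplyLin, outDDLin] using
      tendsto_smul_conj2_diagPerm_pureTensor_sub hM hH hU hν hdec hx σ

end General

/-- Corollary `dec14bc`. With `M_m → 0` symmetric, `M_m/‖M_m‖ → M`,
`μ` nonincreasing, and orthogonal `U_m → U` satisfying
`Diag μ + M_m = U_m (Diag λ(Diag μ + M_m)) U_mᵀ`: for every `μ`-block-constant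
`k`-tensor `T` and permutation `σ` of `{1,…,k}`, the `2k`-tensors
`(U_m(Diag^σ T)U_mᵀ − Diag^σ T)/‖M_m‖` converge to
`∑_{l=1}^k (Diag^{σ_{(l)}} T^{(l)}_out)[M]`. -/
theorem statement16 {n k : ℕ}
    (μ : Fin n → ℝ) (hμ : Antitone μ)
    (lam : Matrix (Fin n) (Fin n) ℝ → Fin n → ℝ) (hlam : IsEigCF lam)
    (M : ℕ → Matrix (Fin n) (Fin n) ℝ) (hMsym : ∀ m, (M m).IsSymm)
    (hM0 : Tendsto M atTop (nhds 0))
    (Mlim : Matrix (Fin n) (Fin n) ℝ)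
    (hMdir : Tendsto (fun m => ‖M m‖⁻¹ • M m) atTop (nhds Mlim))
    (U : ℕ → Matrix (Fin n) (Fin n) ℝ) (hUo : ∀ m, (U m)ᵀ * U m = 1)
    (Ulim : Matrix (Fin n) (Fin n) ℝ) (hUlim : Tendsto U atTop (nhds Ulim))
    (hdec : ∀ m, Matrix.diagonal μ + M m
      = U m * Matrix.diagonal (lam (Matrix.diagonal μ + M m)) * (U m)ᵀ)
    (T : Tensor k n) (hT : BlockConstant μ T) (σ : Equiv.Perm (Fin k))
    : Tendsto
        (fun m => ‖M m‖⁻¹ • (conj2 (U m) (diagPerm σ T) - diagPerm σ T))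
        atTop
        (nhds (∑ l : Fin k,
          lastApply (diagPerm (permIns σ l.castSucc) (outDD μ T l)) Mlim)) :=
  statement16_general hM0 hMdir (fun m => (mem_orthogonalGroup_iff' _ _).2 (hUo m))
    (hlam.tendsto_diagonal_add hμ hMsym hM0) hdec hT σ

end
end

section
/- Fix μ ∈ ℝ^n. Let ν be a permutation on {1,…,k+1} with s disjoint cycles such that ν(k+1) = k+1, let T be a μ-block-constant s-tensor on ℝ^n, U a block-diagonal orthogonal matrix (U^{ij} = 0 whenever μ_i ≠ μ_j), M a symmetric matrix, and h ∈ ℝ^n a vector with UᵀM_in U = Diag h. Then T^ν[h] = T^ν[diag M], where diag M = (M^{11},…,M^{nn}). -/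
open scoped BigOperators
open Filter Asymptotics Matrix

attribute [local instance] Matrix.normedAddCommGroup

noncomputable section

/-- `T^ν`: the lifting of an `s`-tensor `T` to a `(k+1)`-tensor along a permutation `ν`
of `{1,…,k+1}` with `s` disjoint cycles. The cycles are labelled by `Fin s` via a
labelling map `c` (constant exactly on cycles), and `r` picks a representative of each
cycle. `(T^ν)^{i₁…i_{k+1}} = T^{p₁…p_s}` if `i_l = i_{ν(l)}` for all `l` (where `p_t`
is the common value of `i` on the `t`-th cycle), and `0` otherwise. -/
def cycleLift {k s n : ℕ} (ν : Equiv.Perm (Fin (k+1))) (r : Fin s → Fin (k+1))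
    (T : Tensor s n) : Tensor (k+1) n :=
  fun i => if ∀ l, i (ν l) = i l then T (fun t => i (r t)) else 0

/-!
If `f` is constant on the blocks of `μ`, then `Diag f` commutes with every block-diagonal matrix
`U`. Cyclicity of the trace therefore makes `f · diag A = tr (Diag f * A)` invariant under
`A ↦ U⁻¹ * A * U`; here `A = M_in`, which has the same diagonal as `M`. Since `ν` fixes `k + 1`,
the last index of `T^ν` forms a cycle of its own, so `T^ν` is block-constant in that index, and
each entry of its contraction with `diag A` is such a pairing.
-/

section Matrix

variable {ι R : Type*} [Fintype ι] [DecidableEq ι] [CommSemiring R]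

theorem commute_diagonal_of_factorsThrough {α : Type*} {μ : ι → α} {U : Matrix ι ι R} {f : ι → R}
    (hU : ∀ i j, μ i ≠ μ j → U i j = 0) (hf : f.FactorsThrough μ) :
    Commute (diagonal f) U := by
  ext i j
  rw [diagonal_mul, mul_diagonal, mul_comm]
  by_cases hij : μ i = μ j
  · rw [hf hij]
  · rw [hU i j hij, zero_mul, zero_mul]

theorem dotProduct_diag_eq_trace (f : ι → R) (A : Matrix ι ι R) :
    f ⬝ᵥ diag A = trace (diagonal f * A) := by
  simp only [dotProduct, trace, diag_apply, diagonal_mul]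

theorem dotProduct_diag_conj_of_commute {U V : Matrix ι ι R} {f : ι → R} (hUV : U * V = 1)
    (hf : Commute (diagonal f) U) (A : Matrix ι ι R) :
    f ⬝ᵥ diag (V * A * U) = f ⬝ᵥ diag A := by
  calc f ⬝ᵥ diag (V * A * U)
      = trace (diagonal f * (V * A * U)) := dotProduct_diag_eq_trace f _
    _ = trace (U * diagonal f * (V * A)) := by
        rw [← Matrix.mul_assoc, trace_mul_comm, ← Matrix.mul_assoc]
    _ = trace (diagonal f * (U * V) * A) := by
        rw [← hf.eq]; simp only [Matrix.mul_assoc]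
    _ = f ⬝ᵥ diag A := by rw [hUV, Matrix.mul_one, dotProduct_diag_eq_trace]

end Matrix

theorem diag_matIn {n : ℕ} (μ : Fin n → ℝ) (A : Matrix (Fin n) (Fin n) ℝ) :
    diag (matIn μ A) = diag A := by
  ext i
  simp [matIn]

theorem update_perm_invariant_iff {ι α : Type*} [DecidableEq ι] {ν : Equiv.Perm ι} {p : ι}
    (hp : ν p = p) (x : ι → α) (a : α) :
    (∀ l, Function.update x p a (ν l) = Function.update x p a l) ↔
      ∀ l, l ≠ p → x (ν l) = x l := by
  have hne {l : ι} (hl : l ≠ p) : ν l ≠ p := fun h => hl (ν.injective (h.trans hp.symm))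
  refine ⟨fun H l hl => ?_, fun H l => ?_⟩
  · simpa only [Function.update_of_ne hl, Function.update_of_ne (hne hl)] using H l
  · obtain rfl | hl := eq_or_ne l p
    · rw [hp]
    · rw [Function.update_of_ne hl, Function.update_of_ne (hne hl), H l hl]

theorem snoc_perm_invariant_iff {α : Type*} {k : ℕ} {ν : Equiv.Perm (Fin (k + 1))}
    (hν : ν (Fin.last k) = Fin.last k) (i : Fin k → α) (a b : α) :
    (∀ l, (Fin.snoc i a : Fin (k + 1) → α) (ν l) = (Fin.snoc i a : Fin (k + 1) → α) l) ↔
      ∀ l, (Fin.snoc i b : Fin (k + 1) → α) (ν l) = (Fin.snoc i b : Fin (k + 1) → α) l := by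
  simpa only [Fin.update_snoc_last] using
    (update_perm_invariant_iff hν (Fin.snoc i a : Fin (k + 1) → α) a).trans
      (update_perm_invariant_iff hν (Fin.snoc i a : Fin (k + 1) → α) b).symm

theorem BlockConstant.cycleLift_snoc_factorsThrough {n k s : ℕ} {μ : Fin n → ℝ} {T : Tensor s n}
    (hT : BlockConstant μ T) {ν : Equiv.Perm (Fin (k + 1))} (hν : ν (Fin.last k) = Fin.last k)
    (r : Fin s → Fin (k + 1)) (i : Fin k → Fin n) :
    Function.FactorsThrough (fun a => cycleLift ν r T (Fin.snoc i a)) μ := by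
  intro a b hab
  have hμ : μ ∘ (Fin.snoc i a : Fin (k + 1) → Fin n) =
      μ ∘ (Fin.snoc i b : Fin (k + 1) → Fin n) := by
    rw [Fin.comp_snoc, Fin.comp_snoc, hab]
  have hT_eq : T (fun t => (Fin.snoc i a : Fin (k + 1) → Fin n) (r t)) =
      T (fun t => (Fin.snoc i b : Fin (k + 1) → Fin n) (r t)) :=
    hT _ _ fun t => congrFun hμ (r t)
  simp only [cycleLift, snoc_perm_invariant_iff hν i a b, hT_eq]

theorem statement19_general {α : Type*} {n k : ℕ} {μ : Fin n → α} {S : Tensor (k + 1) n}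
    (hS : ∀ i, Function.FactorsThrough (fun a => S (Fin.snoc i a)) μ)
    {U V : Matrix (Fin n) (Fin n) ℝ} (hUV : U * V = 1) (hU : ∀ i j, μ i ≠ μ j → U i j = 0)
    (A : Matrix (Fin n) (Fin n) ℝ) :
    contract S (diag (V * A * U)) = contract S (diag A) :=
  funext fun i =>
    dotProduct_diag_conj_of_commute hUV (commute_diagonal_of_factorsThrough hU (hS i)) A

/-- Proposition `prop-1`. Fix `μ`. Let `ν` be a permutation of
`{1,…,k+1}` with `s` disjoint cycles and `ν(k+1) = k+1` (the cycles being labelled by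
`c : Fin (k+1) → Fin s` with section `r`), let `T` be a `μ`-block-constant `s`-tensor,
`U` a block-diagonal orthogonal matrix, `M` symmetric, and `h` with
`UᵀM_in U = Diag h`. Then `T^ν[h] = T^ν[diag M]`. -/
theorem statement19 {n k s : ℕ} (μ : Fin n → ℝ)
    (ν : Equiv.Perm (Fin (k+1))) (hν : ν (Fin.last k) = Fin.last k)
    (c : Fin (k+1) → Fin s) (hc : ∀ a b : Fin (k+1), c a = c b ↔ ν.SameCycle a b)
    (r : Fin s → Fin (k+1)) (hr : ∀ t, c (r t) = t)
    (T : Tensor s n) (hT : BlockConstant μ T)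
    (U : Matrix (Fin n) (Fin n) ℝ) (hU : Uᵀ * U = 1)
    (hUb : ∀ i j : Fin n, μ i ≠ μ j → U i j = 0)
    (M : Matrix (Fin n) (Fin n) ℝ) (hM : M.IsSymm)
    (h : Fin n → ℝ) (hh : Uᵀ * matIn μ M * U = Matrix.diagonal h) :
    contract (cycleLift ν r T) h = contract (cycleLift ν r T) (Matrix.diag M) := by
  rw [← diag_matIn μ M, ← statement19_general (hT.cycleLift_snoc_factorsThrough hν r)
    (mul_eq_one_comm.mp hU) hUb, hh, diag_diagonal]

end
end
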